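/- arXiv:1610.01544 — 3 statements merged into one kernel-verified Lean document; each statement's English description precedes it below -/
import Mathlib

section
/- Let W be an m×n real matrix with all entries positive and let W' be an n×m real matrix with all entries positive (m, n ≥ 1). Then there exist vectors a ∈ ℝ^n and b ∈ ℝ^m, all of whose entries are positive, and real numbers λ > 0 and μ > 0, such that b = λ·(W·a), a = μ·(W'·b), and the Euclidean norms of a and b both equal 1. -/
/-!
Scaling aside, `a` is a positive eigenvector of `W' * W` and `b` is `W *ᵥ a`, so the content is the
Perron–Frobenius theorem for an irreducible matrix `A`. Choose `x` in the simplex and `r ≥ 0` with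
`r • x ≤ A *ᵥ x` and `r` as large as possible (Collatz–Wielandt). A sum `P` of powers of `A` has
positive entries and commutes with `A`. If `A *ᵥ x ≠ r • x`, then applying `P` to the nonzero
nonnegative vector `A *ᵥ x - r • x` shows that `P *ᵥ x` satisfies the inequality strictly in every
coordinate, so that `r` can be increased. Hence `x`, and with it the positive vector `P *ᵥ x`, is an
eigenvector.
-/

open Matrix Filter Topology

section Positivity

variable {ι κ R : Type*} [Fintype κ] [Semiring R] [PartialOrder R] [IsStrictOrderedRing R]

lemma dotProduct_pos_of_apply_pos {v w : κ → R} (hv : 0 ≤ v) (hw : 0 ≤ w) {j : κ}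
    (hvj : 0 < v j) (hwj : 0 < w j) : 0 < v ⬝ᵥ w :=
  Finset.sum_pos' (fun k _ ↦ mul_nonneg (hv k) (hw k)) ⟨j, Finset.mem_univ j, mul_pos hvj hwj⟩

lemma mulVec_apply_pos_of_pos {P : Matrix ι κ R} (hP : ∀ i j, 0 < P i j) {x : κ → R}
    (hx : 0 < x) (i : ι) : 0 < (P *ᵥ x) i := by
  obtain ⟨hx_nonneg, j, hj⟩ := Pi.lt_def.mp hx
  exact dotProduct_pos_of_apply_pos (fun k ↦ (hP i k).le) hx_nonneg (hP i j) hj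

lemma pos_of_mem_stdSimplex {x : κ → R} (hx : x ∈ stdSimplex R κ) : 0 < x := by
  refine lt_of_le_of_ne hx.1 ?_
  rintro rfl
  simpa using hx.2

end Positivity

lemma exists_gt_forall_mul_lt {ι : Type*} [Finite ι] {r : ℝ} {y z : ι → ℝ}
    (h : ∀ i, r * y i < z i) : ∃ s > r, ∀ i, s * y i < z i := by
  have h_near : ∀ᶠ s in 𝓝 r, ∀ i, s * y i < z i := eventually_all.mpr fun i ↦
    (continuous_id.mul continuous_const).continuousAt.eventually_lt_const (h i)
  exact h_near.exists_gt

section CollatzWielandt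

variable {ι : Type*} [Fintype ι] {A P : Matrix ι ι ℝ} {x : ι → ℝ} {r : ℝ}

/-- The pairs `(x, r)` of a probability vector `x` and a number `r ≥ 0` with `r • x ≤ A *ᵥ x`
coordinatewise. The supremum of the second components is the Collatz–Wielandt formula for the
Perron root of a nonnegative matrix `A`. -/
def collatzWielandtSet (A : Matrix ι ι ℝ) : Set ((ι → ℝ) × ℝ) :=
  {p | p.1 ∈ stdSimplex ℝ ι ∧ 0 ≤ p.2 ∧ p.2 • p.1 ≤ A *ᵥ p.1}

lemma le_sum_of_mem_collatzWielandtSet (hA : ∀ i j, 0 ≤ A i j)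
    (h : (x, r) ∈ collatzWielandtSet A) : r ≤ ∑ i, ∑ j, A i j := by
  obtain ⟨hx, -, hle⟩ := h
  calc r = ∑ i, r * x i := by rw [← Finset.mul_sum, hx.2, mul_one]
    _ ≤ ∑ i, ∑ j, A i j * x j := Finset.sum_le_sum fun i _ ↦ hle i
    _ ≤ ∑ i, ∑ j, A i j := Finset.sum_le_sum fun i _ ↦ Finset.sum_le_sum fun j _ ↦
      mul_le_of_le_one_right (hA i j) (mem_Icc_of_mem_stdSimplex hx j).2

lemma isCompact_collatzWielandtSet (hA : ∀ i j, 0 ≤ A i j) :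
    IsCompact (collatzWielandtSet A) := by
  have h_closed : IsClosed (collatzWielandtSet A) :=
    ((isClosed_stdSimplex ℝ ι).preimage continuous_fst).inter
      ((isClosed_le continuous_const continuous_snd).inter
        (isClosed_le (continuous_snd.smul continuous_fst)
          (continuous_const.matrix_mulVec continuous_fst)))
  refine ((isCompact_stdSimplex ℝ ι).prod
    (isCompact_Icc (a := 0) (b := ∑ i, ∑ j, A i j))).of_isClosed_subset h_closed ?_
  exact fun p hp ↦ ⟨hp.1, hp.2.1, le_sum_of_mem_collatzWielandtSet hA hp⟩

lemma collatzWielandtSet_nonempty [Nonempty ι] (hA : ∀ i j, 0 ≤ A i j) :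
    (collatzWielandtSet A).Nonempty := by
  classical
  obtain ⟨i⟩ := ‹Nonempty ι›
  refine ⟨(Pi.single i 1, 0), single_mem_stdSimplex ℝ i, le_rfl, fun j ↦ ?_⟩
  simpa using hA j i

lemma inv_sum_smul_mem_collatzWielandtSet (hx : 0 < x) (hr : 0 ≤ r) (h : r • x ≤ A *ᵥ x) :
    ((∑ i, x i)⁻¹ • x, r) ∈ collatzWielandtSet A := by
  have h_sum : 0 < ∑ i, x i := Fintype.sum_pos hx
  have h_inv : 0 ≤ (∑ i, x i)⁻¹ := inv_nonneg.mpr h_sum.le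
  refine ⟨⟨smul_nonneg h_inv hx.le, ?_⟩, hr, ?_⟩
  · simp only [Pi.smul_apply, smul_eq_mul, ← Finset.mul_sum]
    exact inv_mul_cancel₀ h_sum.ne'
  · rw [mulVec_smul, smul_comm]
    exact smul_le_smul_of_nonneg_left h h_inv

lemma mulVec_eq_smul_of_isMaxOn_snd (hP : ∀ i j, 0 < P i j) (hAP : Commute A P)
    (hmem : (x, r) ∈ collatzWielandtSet A)
    (hmax : IsMaxOn Prod.snd (collatzWielandtSet A) (x, r)) : A *ᵥ x = r • x := by
  obtain ⟨hx, hr, hle⟩ := hmem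
  by_contra hne
  have : Nonempty ι := (Function.ne_iff.mp hne).nonempty
  have h_strict (i : ι) : r * (P *ᵥ x) i < (A *ᵥ (P *ᵥ x)) i := by
    have h_comm : P *ᵥ (A *ᵥ x - r • x) = A *ᵥ (P *ᵥ x) - r • (P *ᵥ x) := by
      rw [mulVec_sub, mulVec_smul, mulVec_mulVec, mulVec_mulVec, hAP.eq]
    have h_pos := mulVec_apply_pos_of_pos hP (sub_pos.mpr (hle.lt_of_ne' hne)) i
    rw [h_comm] at h_pos
    exact sub_pos.mp h_pos
  obtain ⟨s, hrs, hs⟩ := exists_gt_forall_mul_lt h_strict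
  have hPx : 0 < P *ᵥ x :=
    lt_of_strongLT (mulVec_apply_pos_of_pos hP (pos_of_mem_stdSimplex hx))
  have hsr : s ≤ r := hmax (inv_sum_smul_mem_collatzWielandtSet hPx (hr.trans hrs.le)
    fun i ↦ (hs i).le)
  exact hrs.not_ge hsr

lemma exists_pos_eigenvector_of_commute [Nonempty ι] (hA : ∀ i j, 0 ≤ A i j)
    (hP : ∀ i j, 0 < P i j) (hAP : Commute A P) :
    ∃ (x : ι → ℝ) (r : ℝ), (∀ i, 0 < x i) ∧ 0 ≤ r ∧ A *ᵥ x = r • x := by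
  obtain ⟨⟨x, r⟩, hmem, hmax⟩ := (isCompact_collatzWielandtSet hA).exists_isMaxOn
    (collatzWielandtSet_nonempty hA) continuous_snd.continuousOn
  have h_eigen : A *ᵥ x = r • x := mulVec_eq_smul_of_isMaxOn_snd hP hAP hmem hmax
  refine ⟨P *ᵥ x, r, mulVec_apply_pos_of_pos hP (pos_of_mem_stdSimplex hmem.1), hmem.2.1, ?_⟩
  rw [mulVec_mulVec, hAP.eq, ← mulVec_mulVec, h_eigen, mulVec_smul]

end CollatzWielandt

section PerronFrobenius

variable {ι R : Type*} [Ring R] [LinearOrder R]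

lemma isIrreducible_of_pos {A : Matrix ι ι R} (hA : ∀ i j, 0 < A i j) : A.IsIrreducible := by
  let : Quiver ι := A.toQuiver
  exact ⟨fun i j ↦ (hA i j).le, fun i j ↦ ⟨Quiver.Hom.toPath (PLift.up (hA i j)), one_pos⟩⟩

variable [Fintype ι] [IsStrictOrderedRing R]

lemma exists_commute_pos_of_isIrreducible {A : Matrix ι ι R} (hA : A.IsIrreducible) :
    ∃ P : Matrix ι ι R, (∀ i j, 0 < P i j) ∧ Commute A P := by
  classical
  choose k _ hk using (isIrreducible_iff_exists_pow_pos hA.nonneg).mp hA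
  refine ⟨∑ i, ∑ j, A ^ k i j, fun i j ↦ ?_, Commute.sum_right _ _ _ fun i _ ↦
    Commute.sum_right _ _ _ fun j _ ↦ Commute.self_pow A (k i j)⟩
  simp only [Matrix.sum_apply]
  have h_nonneg (i' j' : ι) : 0 ≤ (A ^ k i' j') i j := pow_apply_nonneg hA.nonneg _ i j
  exact Finset.sum_pos' (fun i' _ ↦ Finset.sum_nonneg fun j' _ ↦ h_nonneg i' j')
    ⟨i, Finset.mem_univ i, Finset.sum_pos' (fun j' _ ↦ h_nonneg i j')
      ⟨j, Finset.mem_univ j, hk i j⟩⟩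

lemma mulVec_ne_zero_of_isIrreducible [Nonempty ι] {A : Matrix ι ι R} (hA : A.IsIrreducible)
    {x : ι → R} (hx : ∀ i, 0 < x i) : A *ᵥ x ≠ 0 := by
  classical
  intro h_zero
  obtain ⟨i⟩ := ‹Nonempty ι›
  obtain ⟨k, hk, hki⟩ := (isIrreducible_iff_exists_pow_pos hA.nonneg).mp hA i i
  have h_pow_zero : A ^ k *ᵥ x = 0 := by
    rw [← pow_sub_one_mul hk.ne' A, ← mulVec_mulVec, h_zero, mulVec_zero]
  have h_pow_pos : 0 < (A ^ k *ᵥ x) i :=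
    dotProduct_pos_of_apply_pos (pow_apply_nonneg hA.nonneg k i) (fun j ↦ (hx j).le) hki (hx i)
  exact h_pow_pos.ne' (congrFun h_pow_zero i)

theorem exists_pos_eigenvector_of_isIrreducible [Nonempty ι] {A : Matrix ι ι ℝ}
    (hA : A.IsIrreducible) :
    ∃ (x : ι → ℝ) (r : ℝ), (∀ i, 0 < x i) ∧ 0 < r ∧ A *ᵥ x = r • x := by
  obtain ⟨P, hP, hAP⟩ := exists_commute_pos_of_isIrreducible hA
  obtain ⟨x, r, hx, hr, h_eigen⟩ := exists_pos_eigenvector_of_commute hA.nonneg hP hAP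
  have hr_ne : r ≠ 0 := by
    rintro rfl
    exact mulVec_ne_zero_of_isIrreducible hA hx (by rw [h_eigen, zero_smul])
  exact ⟨x, r, hx, hr.lt_of_ne' hr_ne, h_eigen⟩

end PerronFrobenius

lemma exists_pos_norm_toLp_smul_eq_one {ι : Type*} [Fintype ι] (p : ENNReal) [Fact (1 ≤ p)]
    {x : ι → ℝ} (hx : x ≠ 0) : ∃ c : ℝ, 0 < c ∧ ‖WithLp.toLp p (c • x)‖ = 1 := by
  have hx' : WithLp.toLp p x ≠ 0 := (WithLp.toLp_eq_zero p).not.mpr hx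
  refine ⟨‖WithLp.toLp p x‖⁻¹, inv_pos.mpr (norm_pos_iff.mpr hx'), ?_⟩
  rw [WithLp.toLp_smul]
  exact norm_smul_inv_norm (𝕜 := ℝ) hx'

theorem nebs_exists_general {ι κ : Type*} [Fintype ι] [Fintype κ] [Nonempty κ]
    (W : Matrix ι κ ℝ) (W' : Matrix κ ι ℝ) (hW : ∀ i j, 0 ≤ W i j)
    (hW_row : ∀ i, ∃ j, 0 < W i j) (hW'W : (W' * W).IsIrreducible) :
    ∃ (a : κ → ℝ) (b : ι → ℝ) (l mu : ℝ),
      (∀ i, 0 < a i) ∧ (∀ i, 0 < b i) ∧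
      0 < l ∧ 0 < mu ∧
      b = l • W.mulVec a ∧ a = mu • W'.mulVec b ∧
      ‖(WithLp.equiv 2 (κ → ℝ)).symm a‖ = 1 ∧
      ‖(WithLp.equiv 2 (ι → ℝ)).symm b‖ = 1 := by
  obtain ⟨x, r, hx, hr, h_eigen⟩ := exists_pos_eigenvector_of_isIrreducible hW'W
  rw [← mulVec_mulVec] at h_eigen
  have hWx (i : ι) : 0 < (W *ᵥ x) i := by
    obtain ⟨j, hj⟩ := hW_row i
    exact dotProduct_pos_of_apply_pos (hW i) (fun k ↦ (hx k).le) hj (hx j)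
  have hx_ne : x ≠ 0 := (lt_of_strongLT hx).ne'
  have hWx_ne : W *ᵥ x ≠ 0 := by
    intro h_zero
    rw [h_zero, mulVec_zero] at h_eigen
    exact smul_ne_zero hr.ne' hx_ne h_eigen.symm
  obtain ⟨c, hc, hcx⟩ := exists_pos_norm_toLp_smul_eq_one 2 hx_ne
  obtain ⟨d, hd, hdWx⟩ := exists_pos_norm_toLp_smul_eq_one 2 hWx_ne
  refine ⟨c • x, d • W *ᵥ x, d / c, c / (d * r), fun i ↦ mul_pos hc (hx i),
    fun i ↦ mul_pos hd (hWx i), by positivity, by positivity, ?_, ?_, hcx, hdWx⟩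
  · rw [mulVec_smul, smul_smul, div_mul_cancel₀ d hc.ne']
  · rw [mulVec_smul, h_eigen, smul_smul, smul_smul, mul_assoc,
      div_mul_cancel₀ c (mul_pos hd hr).ne']

/-- NEBS existence, Theorem 3.1 of the paper, existence half.
Let `W` be an `m × n` positive real matrix and `W'` an `n × m` positive real matrix
(`m, n ≥ 1`). Then there exist vectors `a ∈ ℝ^n`, `b ∈ ℝ^m` with all entries positive
and Euclidean norm `1`, and reals `λ, μ > 0`, with `b = λ • (W · a)` and
`a = μ • (W' · b)`. -/
theorem nebs_exists (m n : ℕ) (hm : 1 ≤ m) (hn : 1 ≤ n)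
    (W : Matrix (Fin m) (Fin n) ℝ) (W' : Matrix (Fin n) (Fin m) ℝ)
    (hW : ∀ i j, 0 < W i j) (hW' : ∀ i j, 0 < W' i j) :
    ∃ (a : Fin n → ℝ) (b : Fin m → ℝ) (l mu : ℝ),
      (∀ i, 0 < a i) ∧ (∀ i, 0 < b i) ∧
      0 < l ∧ 0 < mu ∧
      b = l • W.mulVec a ∧ a = mu • W'.mulVec b ∧
      ‖(WithLp.equiv 2 (Fin n → ℝ)).symm a‖ = 1 ∧
      ‖(WithLp.equiv 2 (Fin m → ℝ)).symm b‖ = 1 := by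
  have : Nonempty (Fin m) := ⟨⟨0, hm⟩⟩
  have : Nonempty (Fin n) := ⟨⟨0, hn⟩⟩
  refine nebs_exists_general W W' (fun i j ↦ (hW i j).le) (fun i ↦ ⟨⟨0, hn⟩, hW i _⟩)
    (isIrreducible_of_pos fun i j ↦ ?_)
  exact Finset.sum_pos (fun k _ ↦ mul_pos (hW' i k) (hW k j)) Finset.univ_nonempty
end

section
/- Let W be an m×n real matrix with all entries positive and let W' be an n×m real matrix with all entries positive. Suppose (a₁, b₁) with λ₁, μ₁ > 0 and (a₂, b₂) with λ₂, μ₂ > 0 both satisfy: all entries of aᵢ ∈ ℝ^n and bᵢ ∈ ℝ^m are positive, ‖aᵢ‖ = ‖bᵢ‖ = 1 in the Euclidean norm, bᵢ = λᵢ·(W·aᵢ) and aᵢ = μᵢ·(W'·bᵢ). Then a₁ = a₂ and b₁ = b₂. -/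
/-!
Eliminating `b` from the two relations shows that `a` is a nonnegative eigenvector of `W' * W`, so
the theorem rests on the Perron–Frobenius fact that any two nonnegative eigenvectors `x`, `y` of an
irreducible matrix `M`, say with eigenvalues `r ≤ s`, lie on the same ray. Subtract from `x` the
largest multiple `t • y` that keeps `x - t • y` nonnegative. At an index `i` where this difference
vanishes, its image under `M` equals `(r - s) * x i ≤ 0`, so the difference also vanishes at every
`j` with `0 < M i j`; as the graph of `M` is strongly connected, it is zero. Hence `a₁` and `a₂` lie
on the same ray, so do their images `b₁` and `b₂`, and the normalisation turns this into equality.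
-/

open Matrix

variable {ι κ R 𝕜 : Type*}

theorem exists_smul_le_and_apply_eq [Finite ι] [Nonempty ι] [Field 𝕜] [LinearOrder 𝕜]
    [IsStrictOrderedRing 𝕜] {x y : ι → 𝕜} (hx : 0 ≤ x) (hy : ∀ i, 0 < y i) :
    ∃ t : 𝕜, 0 ≤ t ∧ t • y ≤ x ∧ ∃ k, (t • y) k = x k := by
  obtain ⟨k, hk⟩ := Finite.exists_min fun i => x i / y i
  exact ⟨x k / y k, div_nonneg (hx k) (hy k).le, fun i => (le_div_iff₀ (hy i)).1 (hk i), k,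
    div_mul_cancel₀ _ (hy k).ne'⟩

section Irreducible

variable [Fintype ι]

section OrderedRing

variable [Ring R] [LinearOrder R] [IsStrictOrderedRing R] {M : Matrix ι ι R} {v x : ι → R}

theorem apply_eq_zero_of_mulVec_apply_nonpos {A : Matrix κ ι R} {i : κ} {j : ι}
    (hA : ∀ k, 0 ≤ A i k) (hv : 0 ≤ v) (hAv : (A *ᵥ v) i ≤ 0) (hij : 0 < A i j) : v j = 0 := by
  have h_terms : ∀ k ∈ Finset.univ, 0 ≤ A i k * v k := fun k _ => mul_nonneg (hA k) (hv k)
  have h_term : A i j * v j ≤ 0 :=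
    (Finset.single_le_sum h_terms (Finset.mem_univ j)).trans hAv
  exact le_antisymm (nonpos_of_mul_nonpos_right h_term hij) (hv j)

theorem eq_zero_of_isIrreducible_of_mulVec_nonpos_on_zeros (hM : M.IsIrreducible) (hv : 0 ≤ v)
    (hMv : ∀ i, v i = 0 → (M *ᵥ v) i ≤ 0) {k : ι} (hk : v k = 0) : v = 0 := by
  let := M.toQuiver
  funext j
  obtain ⟨path, -⟩ := hM.connected k j
  induction path with
  | nil => exact hk
  | cons _ edge ih =>
    exact apply_eq_zero_of_mulVec_apply_nonpos (hM.nonneg _) hv (hMv _ ih) edge.down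

theorem pos_of_isIrreducible_of_mulVec_eq_smul (hM : M.IsIrreducible) {r : R} (hx : 0 ≤ x)
    (hx₀ : x ≠ 0) (hMx : M *ᵥ x = r • x) (i : ι) : 0 < x i := by
  refine (hx i).lt_of_ne' fun hi => hx₀ ?_
  refine eq_zero_of_isIrreducible_of_mulVec_nonpos_on_zeros hM hx (fun j hj => ?_) hi
  rw [hMx, Pi.smul_apply, hj, smul_zero]

end OrderedRing

variable [Field 𝕜] [LinearOrder 𝕜] [IsStrictOrderedRing 𝕜] {M : Matrix ι ι 𝕜} {x y : ι → 𝕜}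
  {r s : 𝕜}

theorem sameRay_of_isIrreducible_of_mulVec_eq_smul_of_le (hM : M.IsIrreducible) (hx : 0 ≤ x)
    (hy : 0 ≤ y) (hMx : M *ᵥ x = r • x) (hMy : M *ᵥ y = s • y) (hrs : r ≤ s) :
    SameRay 𝕜 x y := by
  obtain rfl | hy₀ := eq_or_ne y 0
  · exact SameRay.zero_right x
  have : Nonempty ι := (Function.ne_iff.1 hy₀).nonempty
  have hy_pos := pos_of_isIrreducible_of_mulVec_eq_smul hM hy hy₀ hMy
  obtain ⟨t, ht, h_le, k, hk⟩ := exists_smul_le_and_apply_eq hx hy_pos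
  have h_image : ∀ i, (x - t • y) i = 0 → (M *ᵥ (x - t • y)) i ≤ 0 := fun i hi => by
    have hxi : x i = t * y i := sub_eq_zero.1 hi
    calc (M *ᵥ (x - t • y)) i = r * x i - t * (s * y i) := by
          simp only [mulVec_sub, mulVec_smul, hMx, hMy, Pi.sub_apply, Pi.smul_apply, smul_eq_mul]
      _ = (r - s) * x i := by rw [hxi]; ring
      _ ≤ 0 := mul_nonpos_of_nonpos_of_nonneg (sub_nonpos.2 hrs) (hx i)
  have h_diff : x - t • y = 0 :=
    eq_zero_of_isIrreducible_of_mulVec_nonpos_on_zeros hM (sub_nonneg.2 h_le) h_image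
      (sub_eq_zero.2 hk.symm)
  rw [sub_eq_zero.1 h_diff]
  exact SameRay.sameRay_nonneg_smul_left y ht

theorem sameRay_of_isIrreducible_of_mulVec_eq_smul (hM : M.IsIrreducible) (hx : 0 ≤ x)
    (hy : 0 ≤ y) (hMx : M *ᵥ x = r • x) (hMy : M *ᵥ y = s • y) : SameRay 𝕜 x y := by
  obtain hrs | hsr := le_total r s
  · exact sameRay_of_isIrreducible_of_mulVec_eq_smul_of_le hM hx hy hMx hMy hrs
  · exact (sameRay_of_isIrreducible_of_mulVec_eq_smul_of_le hM hy hx hMy hMx hsr).symm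

end Irreducible

theorem isIrreducible_of_forall_pos [Ring R] [LinearOrder R] {M : Matrix ι ι R}
    (hM : ∀ i j, 0 < M i j) : M.IsIrreducible where
  nonneg i j := (hM i j).le
  connected i j :=
    letI := M.toQuiver
    ⟨Quiver.Hom.toPath (PLift.up (hM i j)), Nat.one_pos⟩

theorem isIrreducible_mul_of_forall_pos [Fintype κ] [Nonempty κ] [Ring R] [LinearOrder R]
    [IsStrictOrderedRing R] {A : Matrix ι κ R} {B : Matrix κ ι R} (hA : ∀ i k, 0 < A i k)
    (hB : ∀ k j, 0 < B k j) : (A * B).IsIrreducible :=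
  isIrreducible_of_forall_pos fun i j =>
    Finset.sum_pos (fun k _ => mul_pos (hA i k) (hB k j)) Finset.univ_nonempty

theorem mul_mulVec_eq_inv_smul [Fintype ι] [Fintype κ] [Field 𝕜] {A : Matrix ι κ 𝕜}
    {B : Matrix κ ι 𝕜} {x : ι → 𝕜} {y : κ → 𝕜} {c d : 𝕜} (hc : c ≠ 0) (hd : d ≠ 0)
    (hy : y = c • B *ᵥ x) (hx : x = d • A *ᵥ y) : (A * B) *ᵥ x = (d * c)⁻¹ • x := by
  rw [eq_inv_smul_iff₀ (mul_ne_zero hd hc), mul_smul, ← mulVec_mulVec, ← mulVec_smul, ← hy, ← hx]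

section Norm

open scoped ENNReal

variable [Fintype ι] [Fintype κ] {p : ℝ≥0∞} [Fact (1 ≤ p)]

theorem eq_of_sameRay_of_norm_toLp_eq {x y : ι → ℝ} (h : SameRay ℝ x y)
    (h_norm : ‖WithLp.toLp p x‖ = ‖WithLp.toLp p y‖) : x = y :=
  WithLp.toLp_injective p <|
    (h.map (WithLp.linearEquiv p ℝ (ι → ℝ)).symm.toLinearMap).eq_of_norm_eq h_norm

theorem nonempty_of_norm_toLp_ne_zero {x : ι → ℝ} (hx : ‖WithLp.toLp p x‖ ≠ 0) : Nonempty ι := by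
  by_contra h_empty
  rw [not_nonempty_iff] at h_empty
  exact hx (by rw [Subsingleton.elim x 0, WithLp.toLp_zero, norm_zero])

theorem nebs_unique_general {W : Matrix κ ι ℝ} {W' : Matrix ι κ ℝ} (hW : (W' * W).IsIrreducible)
    {a₁ a₂ : ι → ℝ} {b₁ b₂ : κ → ℝ} {l₁ l₂ mu₁ mu₂ : ℝ} (ha₁ : 0 ≤ a₁) (ha₂ : 0 ≤ a₂)
    (hna : ‖WithLp.toLp p a₁‖ = ‖WithLp.toLp p a₂‖)
    (hnb : ‖WithLp.toLp p b₁‖ = ‖WithLp.toLp p b₂‖)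
    (hl₁ : 0 < l₁) (hmu₁ : mu₁ ≠ 0) (hl₂ : 0 < l₂) (hmu₂ : mu₂ ≠ 0)
    (heq₁b : b₁ = l₁ • W *ᵥ a₁) (heq₁a : a₁ = mu₁ • W' *ᵥ b₁)
    (heq₂b : b₂ = l₂ • W *ᵥ a₂) (heq₂a : a₂ = mu₂ • W' *ᵥ b₂) :
    a₁ = a₂ ∧ b₁ = b₂ := by
  have ha_ray : SameRay ℝ a₁ a₂ :=
    sameRay_of_isIrreducible_of_mulVec_eq_smul hW ha₁ ha₂
      (mul_mulVec_eq_inv_smul hl₁.ne' hmu₁ heq₁b heq₁a)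
      (mul_mulVec_eq_inv_smul hl₂.ne' hmu₂ heq₂b heq₂a)
  have hb_ray : SameRay ℝ b₁ b₂ := by
    rw [heq₁b, heq₂b]
    exact ((ha_ray.map W.mulVecLin).pos_smul_left hl₁).pos_smul_right hl₂
  exact ⟨eq_of_sameRay_of_norm_toLp_eq ha_ray hna, eq_of_sameRay_of_norm_toLp_eq hb_ray hnb⟩

end Norm


/-- NEBS uniqueness, Theorem 3.1 of the paper, uniqueness half.
If `W` and `W'` are positive matrices and `(a₁, b₁)` (with `λ₁, μ₁ > 0`) and
`(a₂, b₂)` (with `λ₂, μ₂ > 0`) are both normed eigenvector bicentrality sequences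
for `(W, W')`, then `a₁ = a₂` and `b₁ = b₂`. -/
theorem nebs_unique (m n : ℕ)
    (W : Matrix (Fin m) (Fin n) ℝ) (W' : Matrix (Fin n) (Fin m) ℝ)
    (hW : ∀ i j, 0 < W i j) (hW' : ∀ i j, 0 < W' i j)
    (a₁ a₂ : Fin n → ℝ) (b₁ b₂ : Fin m → ℝ) (l₁ l₂ mu₁ mu₂ : ℝ)
    (ha₁ : ∀ i, 0 < a₁ i) (hb₁ : ∀ i, 0 < b₁ i)
    (ha₂ : ∀ i, 0 < a₂ i) (hb₂ : ∀ i, 0 < b₂ i)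
    (hna₁ : ‖(WithLp.equiv 2 (Fin n → ℝ)).symm a₁‖ = 1)
    (hnb₁ : ‖(WithLp.equiv 2 (Fin m → ℝ)).symm b₁‖ = 1)
    (hna₂ : ‖(WithLp.equiv 2 (Fin n → ℝ)).symm a₂‖ = 1)
    (hnb₂ : ‖(WithLp.equiv 2 (Fin m → ℝ)).symm b₂‖ = 1)
    (hl₁ : 0 < l₁) (hmu₁ : 0 < mu₁) (hl₂ : 0 < l₂) (hmu₂ : 0 < mu₂)
    (heq₁b : b₁ = l₁ • W.mulVec a₁) (heq₁a : a₁ = mu₁ • W'.mulVec b₁)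
    (heq₂b : b₂ = l₂ • W.mulVec a₂) (heq₂a : a₂ = mu₂ • W'.mulVec b₂) :
    a₁ = a₂ ∧ b₁ = b₂ := by
  have : Nonempty (Fin m) := nonempty_of_norm_toLp_ne_zero (hnb₁.trans_ne one_ne_zero)
  exact nebs_unique_general (isIrreducible_mul_of_forall_pos hW' hW) (fun i => (ha₁ i).le)
    (fun i => (ha₂ i).le) (hna₁.trans hna₂.symm) (hnb₁.trans hnb₂.symm) hl₁ hmu₁.ne' hl₂ hmu₂.ne'
    heq₁b heq₁a heq₂b heq₂a
end

section
/- Let W be an m×n real matrix with all entries positive and W' an n×m real matrix with all entries positive, and suppose all row sums of the m×m matrix W·W' are equal, i.e., Σ_j (W·W') i j is the same for every i. If (a, b) is a pair with a ∈ ℝ^n and b ∈ ℝ^m having all entries positive, ‖a‖ = ‖b‖ = 1 in the Euclidean norm, and b = λ·(W·a), a = μ·(W'·b) for some λ, μ > 0, then b is the constant vector with every entry equal to 1/√m. -/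
/-!
A nonnegative `b` with `b = λμ • (W W') b` is an eigenvector of `A = W W'` for some eigenvalue `ρ`.
At a maximum of `b` the eigenvector equation bounds `ρ` by the common row sum `r` of `A`. Hence
`A b = ρ b ≤ r b`, so at a minimum of `b` the weighted mean of the entries of `b` does not exceed
the minimum: every entry carrying positive weight is again minimal, and irreducibility spreads the
minimum to all entries.
-/

open scoped Matrix

section NonnegativeMatrix

variable {ι κ τ R : Type*} [Ring R] [LinearOrder R]

theorem isIrreducible_of_forall_pos_s9 {A : Matrix ι ι R} (hA : ∀ i j, 0 < A i j) :
    A.IsIrreducible where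
  nonneg i j := (hA i j).le
  connected i j := let := A.toQuiver; ⟨Quiver.Hom.toPath ⟨hA i j⟩, one_pos⟩

theorem forall_of_isIrreducible {A : Matrix ι ι R} (hA : A.IsIrreducible) {P : ι → Prop}
    (hP : ∀ i j, 0 < A i j → P i → P j) {i : ι} (hi : P i) (j : ι) : P j := by
  let := A.toQuiver
  obtain ⟨path, -⟩ := hA.connected i j
  induction path with
  | nil => exact hi
  | cons _ edge ih => exact hP _ _ edge.down ih

variable [IsStrictOrderedRing R]

theorem mul_apply_pos_of_forall_pos [Fintype κ] [Nonempty κ] {W : Matrix ι κ R}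
    {W' : Matrix κ τ R} (hW : ∀ i k, 0 < W i k) (hW' : ∀ k j, 0 < W' k j) (i : ι) (j : τ) :
    0 < (W * W') i j :=
  Finset.sum_pos (fun k _ => mul_pos (hW i k) (hW' k j)) Finset.univ_nonempty

variable [Fintype ι] {A : Matrix ι ι R} {f : ι → R}

theorem le_of_smul_le_mulVec_of_row_sum_le {ρ r : R} (hA : ∀ i j, 0 ≤ A i j)
    (hr : ∀ i, ∑ j, A i j ≤ r) (hf : 0 ≤ f) (hf0 : f ≠ 0) (hρ : ρ • f ≤ A *ᵥ f) : ρ ≤ r := by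
  obtain ⟨k, hk⟩ := Function.ne_iff.mp hf0
  have : Nonempty ι := ⟨k⟩
  obtain ⟨p, hp⟩ := Finite.exists_max f
  have hfp : 0 < f p := ((hf k).lt_of_ne' hk).trans_le (hp k)
  refine le_of_mul_le_mul_right ?_ hfp
  calc ρ * f p ≤ ∑ j, A p j * f j := hρ p
    _ ≤ ∑ j, A p j * f p :=
      Finset.sum_le_sum fun j _ => mul_le_mul_of_nonneg_left (hp j) (hA p j)
    _ = (∑ j, A p j) * f p := (Finset.sum_mul ..).symm
    _ ≤ r * f p := mul_le_mul_of_nonneg_right (hr p) hfp.le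

theorem eq_of_mulVec_le_row_sum_mul_of_forall_le {i j : ι} (hA : ∀ k, 0 ≤ A i k)
    (hAf : (A *ᵥ f) i ≤ (∑ k, A i k) * f i) (hmin : ∀ k, f i ≤ f k) (hij : 0 < A i j) :
    f j = f i := by
  have hterm : ∀ k ∈ Finset.univ, A i k * f i ≤ A i k * f k :=
    fun k _ => mul_le_mul_of_nonneg_left (hmin k) (hA k)
  have hsum : ∑ k, A i k * f i = ∑ k, A i k * f k :=
    (Finset.sum_le_sum hterm).antisymm (hAf.trans_eq (Finset.sum_mul ..))
  have hj : A i j * f i = A i j * f j :=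
    (Finset.sum_eq_sum_iff_of_le hterm).mp hsum j (Finset.mem_univ j)
  exact (mul_left_cancel₀ hij.ne' hj).symm

theorem exists_eq_const_of_mulVec_le_row_sum_mul (hA : A.IsIrreducible)
    (hAf : ∀ i, (A *ᵥ f) i ≤ (∑ j, A i j) * f i) : ∃ x, f = Function.const ι x := by
  cases isEmpty_or_nonempty ι
  · exact ⟨0, Subsingleton.elim _ _⟩
  obtain ⟨q, hq⟩ := Finite.exists_min f
  refine ⟨f q, funext (forall_of_isIrreducible hA (P := fun i => f i = f q) ?_ rfl)⟩
  intro i j hij hi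
  exact (eq_of_mulVec_le_row_sum_mul_of_forall_le (hA.nonneg i) (hAf i)
    (fun k => hi.trans_le (hq k)) hij).trans hi

theorem exists_eq_const_of_mulVec_eq_smul (hA : A.IsIrreducible)
    (hrows : ∀ i i', ∑ j, A i j = ∑ j, A i' j) (hf : 0 ≤ f) (hf0 : f ≠ 0) {ρ : R}
    (hρ : A *ᵥ f = ρ • f) : ∃ x, f = Function.const ι x := by
  refine exists_eq_const_of_mulVec_le_row_sum_mul hA fun i => ?_
  have hρ_le : ρ ≤ ∑ j, A i j :=
    le_of_smul_le_mulVec_of_row_sum_le hA.nonneg (fun k => (hrows k i).le) hf hf0 hρ.ge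
  rw [hρ]
  exact mul_le_mul_of_nonneg_right hρ_le (hf i)

end NonnegativeMatrix

theorem eq_one_div_sqrt_card_of_norm_toLp_const_eq_one {ι : Type*} [Fintype ι] {x : ℝ}
    (hx : 0 ≤ x) (hnorm : ‖WithLp.toLp 2 (Function.const ι x)‖ = 1) :
    x = 1 / √(Fintype.card ι) := by
  have hmul : √(Fintype.card ι) * x = 1 := by
    simpa [PiLp.norm_toLp_const, abs_of_nonneg hx, Real.sqrt_eq_rpow] using hnorm
  exact eq_one_div_of_mul_eq_one_right hmul

theorem nebs_constant_of_equal_row_sums_general {ι κ : Type*} [Fintype ι] [Fintype κ]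
    {W : Matrix ι κ ℝ} {W' : Matrix κ ι ℝ} (hWW' : (W * W').IsIrreducible)
    (hrows : ∀ i i', ∑ j, (W * W') i j = ∑ j, (W * W') i' j)
    {a : κ → ℝ} {b : ι → ℝ} (hb : 0 ≤ b) (hnb : ‖WithLp.toLp 2 b‖ = 1)
    {l mu : ℝ} (heqb : b = l • W *ᵥ a) (heqa : a = mu • W' *ᵥ b) :
    b = fun _ => 1 / √(Fintype.card ι) := by
  have hb0 : b ≠ 0 := by
    rintro rfl
    simp at hnb
  have hfix : b = (l * mu) • (W * W') *ᵥ b := by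
    rw [← Matrix.mulVec_mulVec, mul_smul, ← Matrix.mulVec_smul, ← heqa, ← heqb]
  have hlmu : l * mu ≠ 0 := fun h => hb0 (by rw [hfix, h, zero_smul])
  have heig : (W * W') *ᵥ b = (l * mu)⁻¹ • b := (eq_inv_smul_iff₀ hlmu).mpr hfix.symm
  obtain ⟨x, rfl⟩ := exists_eq_const_of_mulVec_eq_smul hWW' hrows hb hb0 heig
  exact funext fun i => eq_one_div_sqrt_card_of_norm_toLp_const_eq_one (hb i) hnb

/-- Remark 5.3 of the paper.
Let `W` and `W'` be positive matrices such that all row sums of `W·W'` are equal.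
If `(a, b)` is an NEBS for `(W, W')` — all entries positive, Euclidean norms `1`,
`b = λ • (W·a)` and `a = μ • (W'·b)` for some `λ, μ > 0` — then `b` is the constant
vector with every entry `1 / √m`. -/
theorem nebs_constant_of_equal_row_sums (m n : ℕ)
    (W : Matrix (Fin m) (Fin n) ℝ) (W' : Matrix (Fin n) (Fin m) ℝ)
    (hW : ∀ i j, 0 < W i j) (hW' : ∀ i j, 0 < W' i j)
    (hrows : ∀ i i' : Fin m, ∑ j, (W * W') i j = ∑ j, (W * W') i' j)
    (a : Fin n → ℝ) (b : Fin m → ℝ)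
    (ha : ∀ i, 0 < a i) (hb : ∀ i, 0 < b i)
    (hna : ‖(WithLp.equiv 2 (Fin n → ℝ)).symm a‖ = 1)
    (hnb : ‖(WithLp.equiv 2 (Fin m → ℝ)).symm b‖ = 1)
    (l mu : ℝ) (hl : 0 < l) (hmu : 0 < mu)
    (heqb : b = l • W.mulVec a) (heqa : a = mu • W'.mulVec b) :
    b = fun _ => 1 / Real.sqrt m := by
  have : Nonempty (Fin n) := not_isEmpty_iff.mp fun _ => by simp [EuclideanSpace.norm_eq] at hna
  simpa only [Fintype.card_fin] using nebs_constant_of_equal_row_sums_general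
    (isIrreducible_of_forall_pos_s9 (mul_apply_pos_of_forall_pos hW hW')) hrows
    (fun i => (hb i).le) hnb heqb heqa
end
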